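/- Let a : ℝ → [0,1] satisfy (A1') and have √a κ-Lipschitz, and H ∈ 𝓗_sqc(α0,α1,γ,η) with γ > 2; set A := {a > 0} and λ0 := inf{μ : a u'' + H(x,u') = μ admits a continuous viscosity supersolution on ℝ}. Let x0 ∈ {a = 0} be an accumulation point of A, let λ > λ0, let f ∈ C¹(A) be a bounded solution of the ODE a(x)f' + H(x,f) = λ on A, and let u_{λ0} be a Lipschitz viscosity solution of a u'' + H(x,u') = λ0 on ℝ. Then: (a) if f ≥ u'_{λ0} on A, then lim_{x→x0, x∈A} f(x) = p⁺_λ(x0) > p⁺_{λ0}(x0) ≥ p̂(x0); (b) if f ≤ u'_{λ0} on A, then lim_{x→x0, x∈A} f(x) = p⁻_λ(x0) < p⁻_{λ0}(x0) ≤ p̂(x0). In particular λ̂(x0) ≤ λ0. -/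

import Mathlib

open Real Set Filter Topology MeasureTheory

noncomputable section

/-- The Hamiltonian class `𝓗(α₀, α₁, γ)`: growth condition (H1) and the local
Lipschitz conditions (H2), (H3). -/
def HamClass (a0 a1 g : ℝ) (H : ℝ → ℝ → ℝ) : Prop :=
  (∀ x p : ℝ, a0 * |p| ^ g - 1 / a0 ≤ H x p) ∧
  (∀ x p : ℝ, H x p ≤ a1 * (|p| ^ g + 1)) ∧
  (∀ x p q : ℝ, |H x p - H x q| ≤ a1 * (|p| + |q| + 1) ^ (g - 1) * |p - q|) ∧
  (∀ x y p : ℝ, |H x p - H y p| ≤ a1 * (|p| ^ g + 1) * |x - y|)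

/-- The strictly quasiconvex class `𝓗_sqc(α₀, α₁, γ, η)` with (unique) minimizer map
`phat`. -/
def HamSqc (a0 a1 g eta : ℝ) (H : ℝ → ℝ → ℝ) (phat : ℝ → ℝ) : Prop :=
  HamClass a0 a1 g H ∧
  (∀ x p : ℝ, H x (phat x) ≤ H x p) ∧
  (∀ x p : ℝ, (∀ q : ℝ, H x p ≤ H x q) → p = phat x) ∧
  (∀ x p1 p2 : ℝ, p1 < p2 → p2 ≤ phat x → eta * |p1 - p2| ≤ H x p1 - H x p2) ∧
  (∀ x p1 p2 : ℝ, phat x ≤ p1 → p1 < p2 → eta * |p1 - p2| ≤ H x p2 - H x p1)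

/-- A continuous `u` is a viscosity supersolution of `a(x) u'' + H(x, u') = lam` on `U`:
at every local minimum point `x0 ∈ U` of `u - φ`, with `φ` of class `C²`, one has
`a(x0) φ''(x0) + H(x0, φ'(x0)) ≤ lam`. -/
def ViscSuperOn (a : ℝ → ℝ) (H : ℝ → ℝ → ℝ) (lam : ℝ) (U : Set ℝ) (u : ℝ → ℝ) : Prop :=
  ∀ φ : ℝ → ℝ, ContDiff ℝ 2 φ → ∀ x0 ∈ U, IsLocalMin (fun x => u x - φ x) x0 →
    a x0 * deriv (deriv φ) x0 + H x0 (deriv φ x0) ≤ lam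

/-- Viscosity subsolution of `a(x) u'' + H(x, u') = lam` on `U`. -/
def ViscSubOn (a : ℝ → ℝ) (H : ℝ → ℝ → ℝ) (lam : ℝ) (U : Set ℝ) (u : ℝ → ℝ) : Prop :=
  ∀ φ : ℝ → ℝ, ContDiff ℝ 2 φ → ∀ x0 ∈ U, IsLocalMax (fun x => u x - φ x) x0 →
    lam ≤ a x0 * deriv (deriv φ) x0 + H x0 (deriv φ x0)

/-- Viscosity solution of `a(x) u'' + H(x, u') = lam` on `U`. -/
def ViscSolOn (a : ℝ → ℝ) (H : ℝ → ℝ → ℝ) (lam : ℝ) (U : Set ℝ) (u : ℝ → ℝ) : Prop :=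
  ViscSubOn a H lam U u ∧ ViscSuperOn a H lam U u

/-- The critical value `λ₀`: the infimum of the levels `lam` at which the stationary
equation `a u'' + H(x, u') = lam` admits a continuous viscosity supersolution on `ℝ`. -/
def CriticalValue (a : ℝ → ℝ) (H : ℝ → ℝ → ℝ) : ℝ :=
  sInf {lam : ℝ | ∃ u : ℝ → ℝ, Continuous u ∧ ViscSuperOn a H lam Set.univ u}

/-- Condition (A1'): `a ≢ 0` and every connected component of `A := {a > 0}` is bounded
(components of an open subset of `ℝ` are automatically open intervals). -/
def CondA1' (a : ℝ → ℝ) : Prop :=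
  (∃ x, a x ≠ 0) ∧
  ∀ x, 0 < a x → Bornology.IsBounded (connectedComponentIn {y : ℝ | 0 < a y} x)

theorem aux_slope (u : ℝ → ℝ) (L : NNReal) (hu : LipschitzWith L u) (Q s t : ℝ) (hst : s ≤ t)
    (hd : ∀ y ∈ Set.Icc s t, deriv u y ≤ Q) : u t - u s ≤ Q * (t - s) := by
  have hac : AbsolutelyContinuousOnInterval u s t :=
    (hu.lipschitzOnWith (s := Set.uIcc s t)).absolutelyContinuousOnInterval
  rw [← hac.integral_deriv_eq_sub]
  have h := intervalIntegral.integral_mono_on (f := deriv u) (g := fun _ => Q) hst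
    hac.intervalIntegrable_deriv (intervalIntegrable_const) hd
  simpa [mul_comm] using h

theorem aux_quad (a : ℝ → ℝ) (H : ℝ → ℝ → ℝ) (lam0 : ℝ) (u : ℝ → ℝ) (hucont : Continuous u)
    (L : ℝ) (hL : 0 ≤ L) (hu : ∀ x y, |u x - u y| ≤ L * |x - y|)
    (hsup : ViscSuperOn a H lam0 Set.univ u) (m r B : ℝ) (hr : 0 < r)
    (hB : ∀ y ∈ Set.Icc (m - r) (m + r), a y ≤ B) :
    ∃ z p k, z ∈ Set.Ioo (m - r) (m + r) ∧ |p| ≤ 2 * (L + 1) ∧ 0 < k ∧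
      (∀ y ∈ Set.Icc (m - r) (m + r), p * (y - z) - k * (y - z) ^ 2 ≤ u y - u z) ∧
      H z p * r ≤ lam0 * r + 2 * (L + 1) * B := by
  obtain ⟨k, hk⟩ : ∃ k, k = (L + 1) / r := ⟨_, rfl⟩
  have hkr : k * r = L + 1 := by rw [hk]; field_simp
  have hkpos : 0 < k := by rw [hk]; positivity
  obtain ⟨z, hz, hmin⟩ := (isCompact_Icc (a := m - r) (b := m + r)).exists_isMinOn
    ⟨m, by constructor <;> linarith⟩
    (f := fun x => u x + k * (x - m) ^ 2) (by fun_prop)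
  have hmin' : ∀ y ∈ Set.Icc (m - r) (m + r), u z + k * (z - m) ^ 2 ≤ u y + k * (y - m) ^ 2 :=
    fun y hy => hmin hy
  have hint : ¬ |z - m| = r := by
    intro h
    have h1 := hmin' m (by constructor <;> linarith)
    have h2 := (abs_le.mp (hu m z)).2
    rw [abs_sub_comm, h] at h2
    have h3 : (z - m) ^ 2 = r ^ 2 := by rw [← sq_abs, h]
    rw [h3] at h1
    have h4 : k * r ^ 2 = (L + 1) * r := by rw [← hkr]; ring
    nlinarith
  have hz' : |z - m| ≤ r := abs_le.mpr ⟨by linarith [hz.1], by linarith [hz.2]⟩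
  have hlt : |z - m| < r := lt_of_le_of_ne hz' hint
  have hz2 : z ∈ Set.Ioo (m - r) (m + r) := by
    have := abs_lt.mp hlt
    constructor <;> linarith [this.1, this.2]
  have hd1 : ∀ x, HasDerivAt (fun x => -(k * (x - m) ^ 2)) (-(2 * k * (x - m))) x := by
    intro x
    have h := (((hasDerivAt_id x).sub_const m).pow 2).const_mul k |>.neg
    exact h.congr_deriv (by simp; ring)
  have hd1' : deriv (fun x => -(k * (x - m) ^ 2)) = fun x => -(2 * k * (x - m)) :=
    funext fun x => (hd1 x).deriv
  have hd2 : ∀ x, HasDerivAt (fun x => -(2 * k * (x - m))) (-(2 * k)) x := by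
    intro x
    have h := ((hasDerivAt_id x).sub_const m).const_mul (2 * k) |>.neg
    exact h.congr_deriv (by simp)
  have hv := hsup (fun x => -(k * (x - m) ^ 2)) (by fun_prop) z (Set.mem_univ z) (by
    filter_upwards [Ioo_mem_nhds hz2.1 hz2.2] with y hy
    have := hmin' y ⟨hy.1.le, hy.2.le⟩
    linarith)
  rw [hd1', (hd2 z).deriv] at hv
  refine ⟨z, -(2 * k * (z - m)), k, hz2, ?_, hkpos, ?_, ?_⟩
  · rw [abs_neg, abs_mul, abs_of_pos (by positivity : 0 < 2 * k)]
    nlinarith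
  · intro y hy
    have := hmin' y hy
    nlinarith
  · have h1 : H z (-(2 * k * (z - m))) ≤ lam0 + a z * (2 * k) := by
      have : a z * -(2 * k) + H z (-(2 * k * (z - m))) ≤ lam0 := hv
      linarith
    have h2 := mul_le_mul_of_nonneg_right h1 hr.le
    have h3 : (lam0 + a z * (2 * k)) * r = lam0 * r + 2 * (L + 1) * a z := by rw [← hkr]; ring
    have h4 : 2 * (L + 1) * a z ≤ 2 * (L + 1) * B :=
      mul_le_mul_of_nonneg_left (hB z hz) (by positivity)
    linarith

theorem aux_barrier (g : ℝ → ℝ) (s t β : ℝ) (hg : ∀ y ∈ Set.Icc s t, DifferentiableAt ℝ g y)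
    (ht : β ≤ g t) (hb : ∀ y ∈ Set.Icc s t, g y = β → deriv g y < 0) :
    ∀ y ∈ Set.Icc s t, β ≤ g y := by
  have hc : ∀ y ∈ Set.Icc (-t) (-s), HasDerivAt (fun y => -g (-y)) (deriv g (-y)) y := by
    intro y hy
    have h1 : HasDerivAt g (deriv g (-y)) (-y) :=
      (hg (-y) ⟨by linarith [hy.2], by linarith [hy.1]⟩).hasDerivAt
    have h2 := (h1.comp y (hasDerivAt_neg y)).neg
    exact h2.congr_deriv (by simp)
  have := image_le_of_deriv_right_lt_deriv_boundary' (f := fun y => -g (-y))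
    (f' := fun y => deriv g (-y)) (a := -t) (b := -s) (B := fun _ => -β) (B' := fun _ => 0)
    (fun y hy => (hc y hy).continuousAt.continuousWithinAt)
    (fun y hy => (hc y ⟨hy.1, hy.2.le⟩).hasDerivWithinAt)
    (by simpa using ht) continuousOn_const (fun y _ => hasDerivWithinAt_const _ _ _)
    (fun y hy he => hb (-y) ⟨by linarith [hy.2], by linarith [hy.1]⟩ (by
      have : -g (-y) = -β := he
      linarith))
  intro y hy
  have h := this (x := -y) ⟨by linarith [hy.2], by linarith [hy.1]⟩
  simp at h
  exact h

theorem aux_blowup (a g : ℝ → ℝ) (s r B M c : ℝ) (hr : 0 < r)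
    (hg : ∀ y ∈ Set.Icc (s - 2 * r) s, DifferentiableAt ℝ g y)
    (ha0 : ∀ y, 0 ≤ a y)
    (hB : ∀ y ∈ Set.Icc (s - 2 * r) s, a y ≤ B * r ^ 2)
    (hM : ∀ y ∈ Set.Icc (s - 2 * r) s, |g y| ≤ M)
    (hc : ∀ y ∈ Set.Icc (s - 2 * r) s, c ≤ |a y * deriv g y|) : c ≤ B * M * r := by
  obtain ⟨ξ, hξ, he⟩ := exists_deriv_eq_slope g (a := s - 2 * r) (b := s) (by linarith)
    (fun y hy => (hg y hy).continuousAt.continuousWithinAt)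
    (fun y hy => (hg y ⟨hy.1.le, hy.2.le⟩).differentiableWithinAt)
  have hξ' : ξ ∈ Set.Icc (s - 2 * r) s := ⟨hξ.1.le, hξ.2.le⟩
  have h1 := hc ξ hξ'
  have h2 : |deriv g ξ| * r ≤ M := by
    rw [he, abs_div, abs_of_pos (by linarith : 0 < s - (s - 2 * r))]
    have h3 := hM s ⟨by linarith, le_refl _⟩
    have h4 := hM (s - 2 * r) ⟨le_refl _, by linarith⟩
    have h5 : |g s - g (s - 2 * r)| ≤ 2 * M := by
      have := abs_sub (g s) (g (s - 2 * r)); linarith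
    have : |g s - g (s - 2 * r)| / (s - (s - 2 * r)) * r = |g s - g (s - 2 * r)| / 2 := by
      have : s - (s - 2 * r) = 2 * r := by ring
      rw [this]; field_simp
    rw [this]; linarith
  rw [abs_mul, abs_of_nonneg (ha0 ξ)] at h1
  have h5 : a ξ * |deriv g ξ| ≤ B * r ^ 2 * |deriv g ξ| :=
    mul_le_mul_of_nonneg_right (hB ξ hξ') (abs_nonneg _)
  have h6 : 0 ≤ B * r := by
    have := (ha0 ξ).trans (hB ξ hξ')
    by_contra hcon
    push Not at hcon
    nlinarith
  have h7 := mul_le_mul_of_nonneg_left h2 h6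
  nlinarith

theorem aux_sqrt (a : ℝ → ℝ) (κ : ℝ) (ha0 : ∀ y, 0 ≤ a y)
    (hA2 : ∀ x y : ℝ, |Real.sqrt (a x) - Real.sqrt (a y)| ≤ κ * |x - y|) (z : ℝ) (hz : a z = 0)
    (y : ℝ) : a y ≤ κ ^ 2 * (y - z) ^ 2 := by
  have h := hA2 y z
  rw [hz, Real.sqrt_zero, sub_zero, abs_of_nonneg (Real.sqrt_nonneg _)] at h
  have h2 := pow_le_pow_left₀ (Real.sqrt_nonneg _) h 2
  rw [Real.sq_sqrt (ha0 y), mul_pow, sq_abs] at h2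
  exact h2

theorem aux_cont (a : ℝ → ℝ) (κ : ℝ) (ha0 : ∀ y, 0 ≤ a y) (hκ : 0 < κ)
    (hA2 : ∀ x y : ℝ, |Real.sqrt (a x) - Real.sqrt (a y)| ≤ κ * |x - y|) : Continuous a := by
  have h1 : LipschitzWith (Real.toNNReal κ) (fun x => Real.sqrt (a x)) := by
    apply LipschitzWith.of_dist_le_mul
    intro x y
    rw [Real.dist_eq, Real.dist_eq, Real.coe_toNNReal _ hκ.le]
    exact hA2 x y
  have : a = fun x => (Real.sqrt (a x)) ^ 2 := funext fun x => (Real.sq_sqrt (ha0 x)).symm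
  rw [this]
  exact h1.continuous.pow 2

theorem aux_geom (a : ℝ → ℝ) (κ : ℝ) (ha0 : ∀ y, 0 ≤ a y) (hκ : 0 < κ)
    (hA2 : ∀ x y : ℝ, |Real.sqrt (a x) - Real.sqrt (a y)| ≤ κ * |x - y|)
    (x0 : ℝ) (hx0 : a x0 = 0) (x1 : ℝ) (hx1 : 0 < a x1) :
    ∃ r, 0 < r ∧ r ≤ |x1 - x0| ∧ ∀ y ∈ Set.Icc (x1 - 2 * r) x1,
      0 < a y ∧ a y ≤ 9 * κ ^ 2 * r ^ 2 ∧ |y - x0| ≤ 3 * |x1 - x0| := by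
  have hne : x1 ≠ x0 := by rintro rfl; linarith
  obtain ⟨d, hd⟩ : ∃ d, d = |x1 - x0| := ⟨_, rfl⟩
  have hdpos : 0 < d := by rw [hd]; exact abs_pos.mpr (sub_ne_zero.mpr hne)
  have hdist : ∀ y ∈ Set.Icc (x1 - 2 * d) x1, |y - x0| ≤ 3 * d := by
    intro y hy
    have h := abs_le.mp hd.ge
    exact abs_le.mpr ⟨by linarith [hy.1], by linarith [hy.2]⟩
  rw [← hd]
  by_cases hall : ∀ y ∈ Set.Icc (x1 - 2 * d) x1, 0 < a y
  · refine ⟨d, hdpos, le_refl _, fun y hy => ⟨hall y hy, ?_, hdist y hy⟩⟩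
    have h1 := aux_sqrt a κ ha0 hA2 x0 hx0 y
    have h2 : (y - x0) ^ 2 ≤ (3 * d) ^ 2 := by
      rw [← sq_abs (y - x0)]; exact pow_le_pow_left₀ (abs_nonneg _) (hdist y hy) 2
    have h3 := mul_le_mul_of_nonneg_left h2 (sq_nonneg κ)
    nlinarith
  · push Not at hall
    obtain ⟨w, hw, hwa⟩ := hall
    have hcont := aux_cont a κ ha0 hκ hA2
    have hcpt : IsCompact (Set.Icc (x1 - 2 * d) x1 ∩ {y | a y ≤ 0}) :=
      isCompact_Icc.inter_right (isClosed_le hcont continuous_const)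
    obtain ⟨l, hl, hmax⟩ := hcpt.exists_isMaxOn ⟨w, hw, hwa⟩ (f := id) continuous_id.continuousOn
    have hl0 : a l = 0 := le_antisymm hl.2 (ha0 l)
    have hlx : l < x1 := lt_of_le_of_ne hl.1.2 (by rintro rfl; linarith)
    have hl1 := hl.1.1
    obtain ⟨r, hr⟩ : ∃ r, r = (x1 - l) / 3 := ⟨_, rfl⟩
    refine ⟨r, by linarith, by linarith, fun y hy => ?_⟩
    have hy1 := hy.1
    have hy2 := hy.2
    have hyI : y ∈ Set.Icc (x1 - 2 * d) x1 := ⟨by linarith, hy2⟩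
    refine ⟨?_, ?_, hdist y hyI⟩
    · by_contra hcon
      push Not at hcon
      have : y ≤ l := hmax ⟨hyI, hcon⟩
      linarith
    · have h1 := aux_sqrt a κ ha0 hA2 l hl0 y
      have h2 : (y - l) ^ 2 ≤ (3 * r) ^ 2 :=
        pow_le_pow_left₀ (by linarith) (by linarith) 2
      have h3 := mul_le_mul_of_nonneg_left h2 (sq_nonneg κ)
      nlinarith

theorem aux_H3 (H : ℝ → ℝ → ℝ) (α1 γ : ℝ) (hα1 : 0 < α1) (hγ : 2 < γ)
    (h3 : ∀ x y p : ℝ, |H x p - H y p| ≤ α1 * (|p| ^ γ + 1) * |x - y|) (M : ℝ)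
    (x y p : ℝ) (hp : |p| ≤ M) : |H x p - H y p| ≤ α1 * (M ^ γ + 1) * |x - y| := by
  refine (h3 x y p).trans ?_
  have := Real.rpow_le_rpow (abs_nonneg p) hp (by linarith : 0 ≤ γ)
  gcongr

theorem aux_min (a : ℝ → ℝ) (H : ℝ → ℝ → ℝ) (phat : ℝ → ℝ) (κ α1 γ : ℝ) (ha0 : ∀ y, 0 ≤ a y)
    (hA2 : ∀ x y : ℝ, |Real.sqrt (a x) - Real.sqrt (a y)| ≤ κ * |x - y|)
    (hα1 : 0 < α1) (hγ : 2 < γ)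
    (h3 : ∀ x y p : ℝ, |H x p - H y p| ≤ α1 * (|p| ^ γ + 1) * |x - y|)
    (hmin : ∀ x p : ℝ, H x (phat x) ≤ H x p)
    (lam0 x0 : ℝ) (hx0 : a x0 = 0) (u : ℝ → ℝ) (L : NNReal) (hu : LipschitzWith L u)
    (hsup : ViscSuperOn a H lam0 Set.univ u) : H x0 (phat x0) ≤ lam0 := by
  have hu' : ∀ x y, |u x - u y| ≤ (L : ℝ) * |x - y| := fun x y => by
    simpa [Real.dist_eq] using hu.dist_le_mul x y
  obtain ⟨D, hD⟩ : ∃ D, D = 2 * ((L : ℝ) + 1) * κ ^ 2 + α1 * ((2 * ((L : ℝ) + 1)) ^ γ + 1) :=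
    ⟨_, rfl⟩
  have hL : (0 : ℝ) ≤ L := L.2
  have hDpos : 0 < D := by rw [hD]; positivity
  refine le_of_forall_pos_le_add fun e he => ?_
  obtain ⟨r, hr⟩ : ∃ r, r = e / D := ⟨_, rfl⟩
  have hrpos : 0 < r := by rw [hr]; positivity
  have hrD : D * r = e := by rw [hr]; field_simp
  obtain ⟨z, p, k, hz, hpM, hk, -, hle⟩ := aux_quad a H lam0 u hu.continuous L hL hu' hsup x0 r
    (κ ^ 2 * r ^ 2) hrpos (fun y hy => by
      refine (aux_sqrt a κ ha0 hA2 x0 hx0 y).trans ?_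
      have : (y - x0) ^ 2 ≤ r ^ 2 := sq_le_sq' (by linarith [hy.1]) (by linarith [hy.2])
      gcongr)
  have h1 : H z p ≤ lam0 + 2 * ((L : ℝ) + 1) * κ ^ 2 * r := by
    refine le_of_mul_le_mul_right (hle.trans_eq ?_) hrpos
    ring
  have h2 := (abs_le.mp (aux_H3 H α1 γ hα1 hγ h3 _ x0 z p hpM)).2
  have h4 : |x0 - z| ≤ r := abs_le.mpr ⟨by linarith [hz.2], by linarith [hz.1]⟩
  have h5 : α1 * ((2 * ((L : ℝ) + 1)) ^ γ + 1) * |x0 - z| ≤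
    α1 * ((2 * ((L : ℝ) + 1)) ^ γ + 1) * r := by gcongr
  have h6 := hmin x0 p
  rw [← hrD, hD]
  linarith

theorem aux_Hcont (H : ℝ → ℝ → ℝ) (α1 γ : ℝ) (hγ : 2 < γ)
    (h2 : ∀ x p q : ℝ, |H x p - H x q| ≤ α1 * (|p| + |q| + 1) ^ (γ - 1) * |p - q|) (x : ℝ) :
    Continuous (H x) := by
  rw [continuous_iff_continuousAt]
  intro q
  have hc : Continuous (fun p : ℝ => α1 * (|p| + |q| + 1) ^ (γ - 1) * |p - q|) := by
    refine Continuous.mul (continuous_const.mul ?_) (by fun_prop)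
    exact Continuous.rpow_const (by fun_prop) (fun _ => Or.inr (by linarith))
  have ht := hc.tendsto q
  simp only [sub_self, abs_zero, mul_zero] at ht
  rw [ContinuousAt, tendsto_iff_dist_tendsto_zero]
  refine squeeze_zero (fun _ => dist_nonneg) (fun p => ?_) ht
  rw [Real.dist_eq]
  exact h2 x p q

set_option maxHeartbeats 1000000 in
theorem aux_core (a : ℝ → ℝ) (H : ℝ → ℝ → ℝ) (phat : ℝ → ℝ) (κ α1 γ η : ℝ)
    (ha0 : ∀ y, 0 ≤ a y) (hκ : 0 < κ)
    (hA2 : ∀ x y : ℝ, |Real.sqrt (a x) - Real.sqrt (a y)| ≤ κ * |x - y|)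
    (hα1 : 0 < α1) (hγ : 2 < γ) (hη : 0 < η)
    (h3 : ∀ x y p : ℝ, |H x p - H y p| ≤ α1 * (|p| ^ γ + 1) * |x - y|)
    (x0 : ℝ) (hHc : Continuous (H x0))
    (hq1 : ∀ p1 p2 : ℝ, p1 < p2 → p2 ≤ phat x0 → η * |p1 - p2| ≤ H x0 p1 - H x0 p2)
    (hq2 : ∀ p1 p2 : ℝ, phat x0 ≤ p1 → p1 < p2 → η * |p1 - p2| ≤ H x0 p2 - H x0 p1)
    (hax0 : a x0 = 0) (lam0 lam : ℝ) (hlam : lam0 < lam) (hle0 : H x0 (phat x0) ≤ lam0)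
    (f : ℝ → ℝ) (hfd : ∀ x, 0 < a x → DifferentiableAt ℝ f x)
    (Mf : ℝ) (hfM : ∀ x : ℝ, 0 < a x → |f x| ≤ Mf)
    (hode : ∀ x : ℝ, 0 < a x → a x * deriv f x + H x (f x) = lam)
    (u : ℝ → ℝ) (L : NNReal) (hu : LipschitzWith L u)
    (hsup : ViscSuperOn a H lam0 Set.univ u)
    (hfu : ∀ x : ℝ, 0 < a x → deriv u x ≤ f x)
    (P : ℝ) (hP1 : phat x0 ≤ P) (hP2 : H x0 P = lam) :
    Tendsto f (𝓝[{x : ℝ | 0 < a x}] x0) (𝓝 P) := by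
  have hL : (0 : ℝ) ≤ L := L.2
  have hu' : ∀ x y, |u x - u y| ≤ (L : ℝ) * |x - y| := fun x y => by
    simpa [Real.dist_eq] using hu.dist_le_mul x y
  -- the intermediate level
  obtain ⟨v, hv⟩ : ∃ v, v = (lam0 + lam) / 2 := ⟨_, rfl⟩
  obtain ⟨Q, hQ1, hQ2⟩ : ∃ Q, Q ≤ phat x0 ∧ H x0 Q = v := by
    obtain ⟨K, hK⟩ : ∃ K, K = (v - H x0 (phat x0)) / η := ⟨_, rfl⟩
    have hKp : 0 < K := by rw [hK]; apply div_pos _ hη; linarith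
    have hKe : η * K = v - H x0 (phat x0) := by rw [hK]; field_simp
    have h := hq1 (phat x0 - K) (phat x0) (by linarith) le_rfl
    have h' : |phat x0 - K - phat x0| = K := by
      rw [show phat x0 - K - phat x0 = -K by ring, abs_neg, abs_of_pos hKp]
    rw [h'] at h
    have := intermediate_value_Icc' (f := H x0) (a := phat x0 - K) (b := phat x0) (by linarith)
      hHc.continuousOn
    obtain ⟨Q, hQ, hQe⟩ := this (show v ∈ Set.Icc (H x0 (phat x0)) (H x0 (phat x0 - K)) from
      ⟨by linarith, by linarith⟩)
    exact ⟨Q, hQ.2, hQe⟩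
  have hlow : ∀ p, p ≤ Q → v ≤ H x0 p := by
    intro p hp
    rcases hp.eq_or_lt with rfl | hlt
    · exact hQ2.ge
    · have := hq1 p Q hlt hQ1
      have h0 : 0 ≤ η * |p - Q| := by positivity
      linarith
  have hup : ∀ e, 0 < e → ∀ p, P + e ≤ p → lam + η * e ≤ H x0 p := by
    intro e he p hp
    have h1 := hq2 P p hP1 (by linarith)
    rw [abs_sub_comm, abs_of_pos (by linarith : 0 < p - P)] at h1
    have : η * e ≤ η * (p - P) := by gcongr; linarith
    linarith
  have hmid : ∀ e, 0 < e → ∀ p, Q ≤ p → p ≤ P - e → H x0 p ≤ max v (lam - η * e) := by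
    intro e he p hp1 hp2
    rcases le_total p (phat x0) with hc | hc
    · refine le_max_of_le_left ?_
      rcases hp1.eq_or_lt with rfl | hlt
      · exact hQ2.le
      · have := hq1 Q p hlt hc
        have h0 : 0 ≤ η * |Q - p| := by positivity
        linarith
    · refine le_max_of_le_right ?_
      have h1 := hq2 p P hc (by linarith)
      rw [abs_sub_comm, abs_of_pos (by linarith : 0 < P - p)] at h1
      have : η * e ≤ η * (P - p) := by gcongr; linarith
      linarith
  obtain ⟨M, hM⟩ : ∃ M, M = max (max Mf 0) (2 * ((L : ℝ) + 1)) := ⟨_, rfl⟩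
  have hMf : Mf ≤ M := by rw [hM]; exact (le_max_left _ _).trans (le_max_left _ _)
  have hML : 2 * ((L : ℝ) + 1) ≤ M := by rw [hM]; exact le_max_right _ _
  have hM0 : 0 ≤ M := by linarith
  obtain ⟨C, hC⟩ : ∃ C, C = α1 * (M ^ γ + 1) := ⟨_, rfl⟩
  have hC0 : 0 < C := by rw [hC]; positivity
  have hHC : ∀ y p, |p| ≤ M → |H y p - H x0 p| ≤ C * |y - x0| := fun y p hp => by
    rw [hC]; exact aux_H3 H α1 γ hα1 hγ h3 M y x0 p hp
  have hfM' : ∀ x : ℝ, 0 < a x → |f x| ≤ M := fun x hx => (hfM x hx).trans hMf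
  rw [Metric.tendsto_nhdsWithin_nhds]
  intro ε hε
  obtain ⟨e, he⟩ : ∃ e, e = ε / 2 := ⟨_, rfl⟩
  have hepos : 0 < e := by rw [he]; positivity
  obtain ⟨c, hc⟩ : ∃ c, c = min (η * e) ((lam - lam0) / 2) / 2 := ⟨_, rfl⟩
  have hcpos : 0 < c := by
    rw [hc]; have : 0 < min (η * e) ((lam - lam0) / 2) := lt_min (by positivity) (by linarith)
    positivity
  have hc1 : 2 * c ≤ η * e := by rw [hc]; linarith [min_le_left (η * e) ((lam - lam0) / 2)]
  have hc2 : 2 * c ≤ (lam - lam0) / 2 := by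
    rw [hc]; linarith [min_le_right (η * e) ((lam - lam0) / 2)]
  obtain ⟨D, hD⟩ : ∃ D, D = 9 * C + 54 * κ ^ 2 * ((L : ℝ) + 1) + 9 * κ ^ 2 * M := ⟨_, rfl⟩
  have hDpos : 0 < D := by rw [hD]; positivity
  refine ⟨c / D, by positivity, ?_⟩
  intro x1 hx1 hdist
  have hx1 : 0 < a x1 := hx1
  rw [Real.dist_eq] at hdist ⊢
  obtain ⟨d, hd⟩ : ∃ d, d = |x1 - x0| := ⟨_, rfl⟩
  have hd0 : 0 ≤ d := by rw [hd]; positivity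
  have hdD : D * d < c := by
    rw [hd]; rw [lt_div_iff₀ hDpos] at hdist; linarith
  have t1 : 0 ≤ C * d := by positivity
  have t2 : 0 ≤ κ ^ 2 * ((L : ℝ) + 1) * d := by positivity
  have t3 : 0 ≤ κ ^ 2 * M * d := by positivity
  have hDe : D * d = 9 * (C * d) + 54 * (κ ^ 2 * ((L : ℝ) + 1) * d) + 9 * (κ ^ 2 * M * d) := by
    rw [hD]; ring
  have hdC : 9 * (C * d) < c := by linarith
  have hdL : 54 * (κ ^ 2 * ((L : ℝ) + 1) * d) < c := by linarith
  have hdM : 9 * (κ ^ 2 * M * d) < c := by linarith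
  have hHn : ∀ y p, |p| ≤ M → |y - x0| ≤ 9 * d → |H y p - H x0 p| ≤ c := by
    intro y p hp hy
    have := hHC y p hp
    have : C * |y - x0| ≤ C * (9 * d) := by gcongr
    linarith
  -- behaviour of f
  have fup : ∀ y, 0 < a y → |y - x0| ≤ 9 * d → P + e ≤ f y → a y * deriv f y ≤ -c := by
    intro y hy hyd hfy
    have h1 := hup e hepos (f y) hfy
    have h2 := abs_le.mp (hHn y (f y) (hfM' y hy) hyd)
    have h4 := hode y hy
    linarith [h2.1]
  have fmid : ∀ y, 0 < a y → |y - x0| ≤ 9 * d → Q ≤ f y → f y ≤ P - e →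
      c ≤ a y * deriv f y := by
    intro y hy hyd hf1 hf2
    have h1 := hmid e hepos (f y) hf1 hf2
    have h2 := abs_le.mp (hHn y (f y) (hfM' y hy) hyd)
    have h4 := hode y hy
    have h5 : max v (lam - η * e) ≤ lam - 2 * c := max_le (by linarith) (by linarith)
    linarith [h2.2]
  obtain ⟨r, hr, hrd, hI⟩ := aux_geom a κ ha0 hκ hA2 x0 hax0 x1 hx1
  rw [← hd] at hrd hI
  have hno : (∀ y ∈ Set.Icc (x1 - 2 * r) x1, c ≤ |a y * deriv f y|) → False := by
    intro hh
    have := aux_blowup a f x1 r (9 * κ ^ 2) M c hr (fun y hy => hfd y (hI y hy).1) ha0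
      (fun y hy => (hI y hy).2.1) (fun y hy => hfM' y (hI y hy).1) hh
    have h2 : 9 * κ ^ 2 * M * r ≤ 9 * κ ^ 2 * M * d := by gcongr
    linarith
  have hupper : f x1 < P + e := by
    by_contra hcon
    push Not at hcon
    have hb := aux_barrier f (x1 - 2 * r) x1 (P + e) (fun y hy => hfd y (hI y hy).1) hcon
      (fun y hy hfy => by
        have h1 := fup y (hI y hy).1 (by linarith [(hI y hy).2.2]) hfy.ge
        have h2 := (hI y hy).1
        by_contra h
        push Not at h
        have := mul_nonneg h2.le h
        linarith)
    refine hno fun y hy => ?_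
    have h1 := fup y (hI y hy).1 (by linarith [(hI y hy).2.2]) (hb y hy)
    have := neg_le_abs (a y * deriv f y)
    linarith
  have hlower : P - e < f x1 := by
    by_contra hcon
    push Not at hcon
    by_cases hall : ∀ y ∈ Set.Icc (x1 - 2 * r) x1, Q ≤ f y
    · have hdn : ∀ y, deriv (fun y => -f y) y = -deriv f y := fun y => deriv.fun_neg
      have hb := aux_barrier (fun y => -f y) (x1 - 2 * r) x1 (-(P - e))
        (fun y hy => (hfd y (hI y hy).1).neg) (neg_le_neg hcon)
        (fun y hy hfy => by
          rw [hdn]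
          have h0 : f y = P - e := by linarith
          have h1 := fmid y (hI y hy).1 (by linarith [(hI y hy).2.2]) (hall y hy) h0.le
          have h2 := (hI y hy).1
          have h8 : 0 < deriv f y := (mul_pos_iff_of_pos_left h2).mp (by linarith)
          linarith)
      refine hno fun y hy => ?_
      have h0 : f y ≤ P - e := by
        have : -(P - e) ≤ -f y := hb y hy
        linarith
      have h1 := fmid y (hI y hy).1 (by linarith [(hI y hy).2.2]) (hall y hy) h0
      exact h1.trans (le_abs_self _)
    · push Not at hall
      obtain ⟨y1, hy1, hfy1⟩ := hall
      have hy1d := (hI y1 hy1).2.2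
      obtain ⟨s, hs, hsd, hJ⟩ := aux_geom a κ ha0 hκ hA2 x0 hax0 y1 (hI y1 hy1).1
      have hJ9 : ∀ y ∈ Set.Icc (y1 - 2 * s) y1, |y - x0| ≤ 9 * d := fun y hy => by
        linarith [(hJ y hy).2.2]
      have hdn : ∀ y, deriv (fun y => -f y) y = -deriv f y := fun y => deriv.fun_neg
      have hfQ : ∀ y ∈ Set.Icc (y1 - 2 * s) y1, f y ≤ Q := by
        have hb := aux_barrier (fun y => -f y) (y1 - 2 * s) y1 (-Q)
          (fun y hy => (hfd y (hJ y hy).1).neg) (neg_le_neg hfy1.le)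
          (fun y hy hfy => by
            rw [hdn]
            have h0 : f y = Q := by linarith
            have h2 := (hJ y hy).1
            have h5 := abs_le.mp (hHn y (f y) (hfM' y h2) (hJ9 y hy))
            have h4 := hode y h2
            have h6 : H x0 (f y) = v := by rw [h0, hQ2]
            have h7 : 0 < a y * deriv f y := by linarith [h5.2]
            have h8 : 0 < deriv f y := (mul_pos_iff_of_pos_left h2).mp h7
            linarith)
        intro y hy
        have : -Q ≤ -f y := hb y hy
        linarith
      have he1 : y1 - s - s = y1 - 2 * s := by ring
      have he2 : y1 - s + s = y1 := by ring
      obtain ⟨z, p, k, hz, hpM, hk, htouch, hle⟩ := aux_quad a H lam0 u hu.continuous L hL hu'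
        hsup (y1 - s) s (9 * κ ^ 2 * s ^ 2) hs (fun y hy => by
          rw [he1, he2] at hy
          exact (hJ y hy).2.1)
      rw [he1, he2] at hz htouch
      have hpQ : p ≤ Q := by
        by_contra hcon2
        push Not at hcon2
        obtain ⟨t, ht⟩ : ∃ t, t = min (y1 - z) ((p - Q) / (2 * k)) := ⟨_, rfl⟩
        have htpos : 0 < t := by
          rw [ht]; exact lt_min (by linarith [hz.2]) (div_pos (by linarith) (by positivity))
        have ht1 : t ≤ y1 - z := by rw [ht]; exact min_le_left _ _
        have ht2 : t * (2 * k) ≤ p - Q := by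
          rw [← le_div_iff₀ (by positivity), ht]; exact min_le_right _ _
        have h1 := htouch (z + t) ⟨by linarith [hz.1], by linarith⟩
        have h2 := aux_slope u L hu Q z (z + t) (by linarith) (fun y hy => by
          have hyJ : y ∈ Set.Icc (y1 - 2 * s) y1 :=
            ⟨by linarith [hy.1, hz.1], by linarith [hy.2]⟩
          exact (hfu y (hJ y hyJ).1).trans (hfQ y hyJ))
        have h5 : z + t - z = t := by ring
        rw [h5] at h1 h2
        have h6 : t * (p - Q) ≤ t * (k * t) := by nlinarith
        have h7 := le_of_mul_le_mul_left h6 htpos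
        linarith
      have h1 : H z p ≤ lam0 + 18 * (κ ^ 2 * ((L : ℝ) + 1) * s) := by
        refine le_of_mul_le_mul_right (hle.trans_eq ?_) hs
        ring
      have h2 := abs_le.mp (hHn z p (hpM.trans hML) (hJ9 z ⟨hz.1.le, hz.2.le⟩))
      have h4 := hlow p hpQ
      have h5 : κ ^ 2 * ((L : ℝ) + 1) * s ≤ κ ^ 2 * ((L : ℝ) + 1) * (3 * d) := by
        gcongr; linarith
      linarith [h2.1]
  rw [abs_lt]
  constructor <;> linarith

theorem aux_level (H : ℝ → ℝ) (hc : Continuous H) (m q lam : ℝ) (hmq : m ≤ q)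
    (h : {p : ℝ | H p ≤ lam} = Set.Icc m q) : H q = lam ∧ H m = lam := by
  have hq : H q ≤ lam := by
    have : q ∈ {p : ℝ | H p ≤ lam} := by rw [h]; exact ⟨hmq, le_rfl⟩
    exact this
  have hm : H m ≤ lam := by
    have : m ∈ {p : ℝ | H p ≤ lam} := by rw [h]; exact ⟨le_rfl, hmq⟩
    exact this
  refine ⟨hq.antisymm ?_, hm.antisymm ?_⟩
  · by_contra hcon
    push Not at hcon
    have : Icc m q ∈ 𝓝 q := by
      rw [← h]
      exact Filter.mem_of_superset ((isOpen_lt hc continuous_const).mem_nhds hcon)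
        (fun p (hp : H p < lam) => hp.le)
    have h2 := Icc_mem_nhds_iff.mp this
    exact lt_irrefl _ h2.2
  · by_contra hcon
    push Not at hcon
    have : Icc m q ∈ 𝓝 m := by
      rw [← h]
      exact Filter.mem_of_superset ((isOpen_lt hc continuous_const).mem_nhds hcon)
        (fun p (hp : H p < lam) => hp.le)
    have h2 := Icc_mem_nhds_iff.mp this
    exact lt_irrefl _ h2.1

theorem aux_reflect_super (a : ℝ → ℝ) (H : ℝ → ℝ → ℝ) (lam0 : ℝ) (u : ℝ → ℝ)
    (h : ViscSuperOn a H lam0 Set.univ u) :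
    ViscSuperOn (fun x => a (-x)) (fun x p => H (-x) (-p)) lam0 Set.univ (fun x => u (-x)) := by
  intro φ hφ x _ hmin
  have h1 : deriv (fun y => φ (-y)) = fun y => -deriv φ (-y) := by
    funext y; exact deriv_comp_neg φ y
  have h2 : deriv (deriv (fun y => φ (-y))) = fun y => deriv (deriv φ) (-y) := by
    rw [h1]; funext y
    rw [deriv.fun_neg, deriv_comp_neg (deriv φ) y, neg_neg]
  have := h (fun y => φ (-y)) (hφ.comp contDiff_neg) (-x) (Set.mem_univ _) (by
    have ht : Tendsto (fun y : ℝ => -y) (𝓝 (-x)) (𝓝 x) := by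
      simpa using (continuous_neg.tendsto (-x))
    have := ht.eventually hmin
    filter_upwards [this] with y hy
    simpa using hy)
  rw [h2, h1] at this
  simpa using this

/-- Theorem `appC teo boundary regularity2`: let `x0 ∈ {a = 0}` be an
accumulation point of `A := {a > 0}`, `lam > λ₀`, `f` a bounded `C¹` solution of
`a f' + H(x,f) = lam` on `A`, and `u_{λ₀}` a Lipschitz viscosity solution at the critical
level.  If `f ≥ u'_{λ₀}` on `A` then `f → p⁺_lam(x0) > p⁺_{λ₀}(x0) ≥ p̂(x0)` at `x0`;
if `f ≤ u'_{λ₀}` on `A` then `f → p⁻_lam(x0) < p⁻_{λ₀}(x0) ≤ p̂(x0)`.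
In particular `λ̂(x0) ≤ λ₀`. -/
theorem statement_11
    (a : ℝ → ℝ) (H : ℝ → ℝ → ℝ) (phat : ℝ → ℝ) (pm pp : ℝ → ℝ → ℝ)
    (κ α0 α1 γ η : ℝ)
    (harange : ∀ x, a x ∈ Set.Icc (0:ℝ) 1)
    (hκ : 0 < κ) (hA2 : ∀ x y : ℝ, |Real.sqrt (a x) - Real.sqrt (a y)| ≤ κ * |x - y|)
    (hA1' : CondA1' a)
    (hα0 : 0 < α0) (hα1 : 0 < α1) (hγ : 2 < γ) (hη : 0 < η)
    (hH : HamSqc α0 α1 γ η H phat)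
    (hp : ∀ lam x : ℝ, H x (phat x) ≤ lam →
      {p : ℝ | H x p ≤ lam} = Set.Icc (pm lam x) (pp lam x))
    (lam0 : ℝ) (hlam0 : lam0 = CriticalValue a H)
    (x0 : ℝ) (hax0 : a x0 = 0) (hacc : x0 ∈ closure {x : ℝ | 0 < a x})
    (lam : ℝ) (hlam : lam0 < lam)
    (f : ℝ → ℝ)
    (hf1 : ContDiffOn ℝ 1 f {x : ℝ | 0 < a x})
    (hfbdd : ∃ M : ℝ, ∀ x : ℝ, 0 < a x → |f x| ≤ M)
    (hode : ∀ x : ℝ, 0 < a x → a x * deriv f x + H x (f x) = lam)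
    (ulam0 : ℝ → ℝ)
    (hulip : ∃ L : NNReal, LipschitzWith L ulam0)
    (husol : ViscSolOn a H lam0 Set.univ ulam0) :
    H x0 (phat x0) ≤ lam0 ∧
    ((∀ x : ℝ, 0 < a x → deriv ulam0 x ≤ f x) →
      Tendsto f (𝓝[{x : ℝ | 0 < a x}] x0) (𝓝 (pp lam x0)) ∧
      pp lam0 x0 < pp lam x0 ∧ phat x0 ≤ pp lam0 x0) ∧
    ((∀ x : ℝ, 0 < a x → f x ≤ deriv ulam0 x) →
      Tendsto f (𝓝[{x : ℝ | 0 < a x}] x0) (𝓝 (pm lam x0)) ∧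
      pm lam x0 < pm lam0 x0 ∧ pm lam0 x0 ≤ phat x0) := by
  obtain ⟨⟨hH1, hH1', hH2, hH3⟩, hmin, huniq, hs1, hs2⟩ := hH
  obtain ⟨L, hL⟩ := hulip
  obtain ⟨M, hM⟩ := hfbdd
  have ha0 : ∀ y, 0 ≤ a y := fun y => (harange y).1
  have hle0 := aux_min a H phat κ α1 γ ha0 hA2 hα1 hγ hH3 hmin lam0 x0 hax0 ulam0 L hL husol.2
  have hHc := aux_Hcont H α1 γ hγ hH2 x0
  have hopen : IsOpen {x : ℝ | 0 < a x} :=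
    isOpen_lt continuous_const (aux_cont a κ ha0 hκ hA2)
  have hfd : ∀ x, 0 < a x → DifferentiableAt ℝ f x := fun x hx =>
    (hf1.differentiableOn (by norm_num)).differentiableAt (hopen.mem_nhds hx)
  have hp0 := hp lam0 x0 hle0
  have hp1 := hp lam x0 (hle0.trans hlam.le)
  have hin0 : phat x0 ∈ Set.Icc (pm lam0 x0) (pp lam0 x0) := by rw [← hp0]; exact hle0
  have hin1 : phat x0 ∈ Set.Icc (pm lam x0) (pp lam x0) := by
    rw [← hp1]; exact hle0.trans hlam.le
  obtain ⟨e0, e0'⟩ := aux_level (H x0) hHc _ _ _ (hin0.1.trans hin0.2) hp0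
  obtain ⟨e1, e1'⟩ := aux_level (H x0) hHc _ _ _ (hin1.1.trans hin1.2) hp1
  have hb1 : pp lam0 x0 ∈ Set.Icc (pm lam x0) (pp lam x0) := by
    rw [← hp1]; exact e0.le.trans hlam.le
  have hb2 : pm lam0 x0 ∈ Set.Icc (pm lam x0) (pp lam x0) := by
    rw [← hp1]; exact e0'.le.trans hlam.le
  refine ⟨hle0, fun hfu => ⟨?_, ?_, hin0.2⟩, fun hfu => ⟨?_, ?_, hin0.1⟩⟩
  · exact aux_core a H phat κ α1 γ η ha0 hκ hA2 hα1 hγ hη hH3 x0 hHc (hs1 x0) (hs2 x0) hax0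
      lam0 lam hlam hle0 f hfd M hM hode ulam0 L hL husol.2 hfu (pp lam x0) hin1.2 e1
  · refine lt_of_le_of_ne hb1.2 fun h => ?_
    rw [h] at e0; linarith
  · have hcore := aux_core (fun x => a (-x)) (fun x p => H (-x) (-p)) (fun x => -phat (-x))
      κ α1 γ η (fun y => ha0 _) hκ
      (fun x y => by
        have := hA2 (-x) (-y)
        rwa [show -x - -y = -(x - y) by ring, abs_neg] at this)
      hα1 hγ hη
      (fun x y p => by
        have := hH3 (-x) (-y) (-p)
        rwa [show -x - -y = -(x - y) by ring, abs_neg, abs_neg] at this)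
      (-x0) (by simp only [neg_neg]; exact hHc.comp continuous_neg)
      (fun p1 p2 h1 h2 => by
        simp only [neg_neg] at h2 ⊢
        have := hs2 x0 (-p2) (-p1) (by linarith) (by linarith)
        rwa [show -p2 - -p1 = p1 - p2 by ring] at this)
      (fun p1 p2 h1 h2 => by
        simp only [neg_neg] at h1 ⊢
        have := hs1 x0 (-p2) (-p1) (by linarith) (by linarith)
        rwa [show -p2 - -p1 = p1 - p2 by ring] at this)
      (by simpa using hax0) lam0 lam hlam (by simpa using hle0) (fun x => -f (-x))
      (fun x hx => ((hfd (-x) hx).comp x differentiableAt_id.neg).neg)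
      M (fun x hx => by rw [abs_neg]; exact hM (-x) hx)
      (fun x hx => by
        rw [deriv.fun_neg, deriv_comp_neg f x, neg_neg, neg_neg]
        exact hode (-x) hx)
      (fun x => ulam0 (-x)) L
      (LipschitzWith.of_dist_le_mul fun x y => by
        have := hL.dist_le_mul (-x) (-y)
        rwa [dist_neg_neg] at this)
      (aux_reflect_super a H lam0 ulam0 husol.2)
      (fun x hx => by
        rw [deriv_comp_neg ulam0 x]
        exact neg_le_neg (hfu (-x) hx))
      (-pm lam x0) (by simpa using hin1.1) (by simpa using e1')
    have ht : Tendsto (fun x : ℝ => -x) (𝓝[{x : ℝ | 0 < a x}] x0)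
        (𝓝[{x : ℝ | 0 < a (-x)}] (-x0)) := by
      refine tendsto_nhdsWithin_of_tendsto_nhds_of_eventually_within _
        ((continuous_neg.tendsto x0).mono_left nhdsWithin_le_nhds) ?_
      filter_upwards [self_mem_nhdsWithin] with x hx
      simpa using hx
    have h2 := (hcore.comp ht).neg
    simp only [neg_neg] at h2
    refine h2.congr fun x => ?_
    simp
  · refine lt_of_le_of_ne hb2.1 fun h => ?_
    rw [← h] at e0'; linarith
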